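/- arXiv:2503.11131 — 2 statements merged into one kernel-verified Lean document; each statement's English description precedes it below -/
import Mathlib

section
/- Let F_q be a finite field with q elements and let U ⊆ F_q^n be a linear subspace. For any two linearly independent vectors x, y ∈ U, the joint support satisfies q · |supp(x) ∪ supp(y)| ≥ (q+1) · ‖U‖₀, i.e., |supp(x) ∪ supp(y)| ≥ (1 + 1/q) · ‖U‖₀. -/
/-!
The span of `x` and `y` contains `q + 1` lines, spanned by `y` and by `x + c • y` for `c ∈ F`.
At a coordinate in the joint support at least one of these `q + 1` vectors vanishes, and outside the
joint support all of them do. Counting the pairs (vector, nonzero coordinate) in two ways, the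
weights add up to at most `q * |supp x ∪ supp y|`; linear independence makes every vector
nonzero, so each weight is at least the minimum distance.
-/

/-- Hamming weight of a vector: the number of nonzero coordinates. -/
noncomputable def hammingWt {ι : Type*} [Fintype ι] {F : Type*} [Zero F] (x : ι → F) : ℕ :=
  Set.ncard {i | x i ≠ 0}

/-- Minimum distance of a linear code: the least Hamming weight of a nonzero codeword. -/
noncomputable def minDist {ι : Type*} [Fintype ι] {F : Type*} [Field F]
    (U : Submodule F (ι → F)) : ℕ :=
  sInf {k | ∃ x ∈ U, x ≠ 0 ∧ hammingWt x = k}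

/-- Representatives of the lines in the span of `x` and `y`, with `none` standing for the
point at infinity of the projective line over `F`. -/
def pencil {F : Type*} [Field F] {n : ℕ} (x y : Fin n → F) : Option F → Fin n → F
  | none => y
  | some c => x + c • y

lemma pencil_mem {F : Type*} [Field F] {n : ℕ} {U : Submodule F (Fin n → F)} {x y : Fin n → F}
    (hx : x ∈ U) (hy : y ∈ U) (o : Option F) : pencil x y o ∈ U := by
  cases o with
  | none => exact hy
  | some c => exact U.add_mem hx (U.smul_mem c hy)

lemma pencil_ne_zero {F : Type*} [Field F] {n : ℕ} {x y : Fin n → F}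
    (hind : LinearIndependent F ![x, y]) (o : Option F) : pencil x y o ≠ 0 := by
  rw [LinearIndependent.pair_iff] at hind
  intro h
  cases o with
  | none => exact one_ne_zero (hind 0 1 (by simpa [pencil] using h)).2
  | some c => exact one_ne_zero (hind 1 c (by simpa [pencil] using h)).1

lemma exists_pencil_apply_eq_zero {F : Type*} [Field F] {n : ℕ} (x y : Fin n → F) (i : Fin n) :
    ∃ o, pencil x y o i = 0 := by
  by_cases h : y i = 0
  · exact ⟨none, h⟩
  · exact ⟨some (-(x i / y i)), by simp [pencil, h]⟩

lemma minDist_le_hammingWt {F : Type*} [Field F] {n : ℕ} {U : Submodule F (Fin n → F)}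
    {v : Fin n → F} (hv : v ∈ U) (h0 : v ≠ 0) : minDist U ≤ hammingWt v :=
  Nat.sInf_le ⟨v, hv, h0, rfl⟩

open Classical in
/-- The contribution of a single coordinate to the double count. -/
lemma card_pencil_ne_zero_le {F : Type*} [Field F] [Fintype F] {n : ℕ} (x y : Fin n → F)
    (i : Fin n) :
    (Finset.univ.filter fun o => pencil x y o i ≠ 0).card ≤
      if x i ≠ 0 ∨ y i ≠ 0 then Fintype.card F else 0 := by
  split_ifs with h
  · obtain ⟨o, ho⟩ := exists_pencil_apply_eq_zero x y i
    have hlt : (Finset.univ.filter fun o => pencil x y o i ≠ 0).card <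
        (Finset.univ : Finset (Option F)).card :=
      Finset.card_lt_card (Finset.filter_ssubset.2 ⟨o, Finset.mem_univ o, by simpa using ho⟩)
    rw [Finset.card_univ, Fintype.card_option] at hlt
    omega
  · push Not at h
    rw [Nat.le_zero, Finset.card_eq_zero, Finset.filter_eq_empty_iff]
    rintro (_ | c) - <;> simp [pencil, h.1, h.2]

/-- For any two linearly independent vectors `x, y` of a subspace `U ⊆ F_q^n`, the joint
support has size at least `(1 + 1/q) ⬝ minDist U`. -/
theorem support_union_of_linearIndependent {F : Type*} [Field F] [Fintype F] {n : ℕ}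
    (U : Submodule F (Fin n → F)) (x y : Fin n → F)
    (hx : x ∈ U) (hy : y ∈ U) (hind : LinearIndependent F ![x, y]) :
    Fintype.card F * Set.ncard ({i | x i ≠ 0} ∪ {i | y i ≠ 0}) ≥
      (Fintype.card F + 1) * minDist U := by
  classical
  have hwt (v : Fin n → F) : hammingWt v = ∑ i, if v i ≠ 0 then 1 else 0 := by
    rw [hammingWt, ← Finset.card_filter, ← Set.ncard_coe_finset]
    simp
  have hunion : Set.ncard ({i | x i ≠ 0} ∪ {i | y i ≠ 0}) =
      (Finset.univ.filter fun i => x i ≠ 0 ∨ y i ≠ 0).card := by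
    rw [← Set.ncard_coe_finset]
    congr 1
    ext i
    simp
  calc (Fintype.card F + 1) * minDist U
      = ∑ _o : Option F, minDist U := by simp
    _ ≤ ∑ o : Option F, hammingWt (pencil x y o) :=
        Finset.sum_le_sum fun o _ =>
          minDist_le_hammingWt (pencil_mem hx hy o) (pencil_ne_zero hind o)
    _ = ∑ i, (Finset.univ.filter fun o => pencil x y o i ≠ 0).card := by
        simp_rw [hwt, Finset.card_filter]
        exact Finset.sum_comm
    _ ≤ ∑ i, if x i ≠ 0 ∨ y i ≠ 0 then Fintype.card F else 0 :=
        Finset.sum_le_sum fun i _ => by convert card_pencil_ne_zero_le x y i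
    _ = Fintype.card F * Set.ncard ({i | x i ≠ 0} ∪ {i | y i ≠ 0}) := by
        rw [hunion, ← Finset.sum_filter, Finset.sum_const, smul_eq_mul, mul_comm]
end

section
/- (Soundness of the MDP reduction.) Let F_q be a finite field with q elements, let Q_1, …, Q_m ∈ F_q^{n×n} be coefficient matrices, let ε > 0 and d ≥ 1, and let C ∈ F_q^{N×n} be a generator matrix of an ε-balanced code of minimum distance d. Define V = {C X Cᵀ : X ∈ F_q^{n×n}, X = Xᵀ, Q_ℓ(X) = 0 for all ℓ ∈ [m]}. If there is no nonzero x ∈ F_q^n with Q_ℓ(x xᵀ) = 0 for all ℓ ∈ [m], then every nonzero Y ∈ V satisfies q · ‖Y‖₀ ≥ (q+1) · d². -/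
/-!
A symmetric matrix all of whose rows are multiples of one row is of the form `c • a aᵀ`, so the
absence of a nonzero common zero `x` forces a nonzero admissible `X` to have two linearly
independent rows `u`, `v` (`exists_indep_rows`). Row `i` of `Y = C X Cᵀ` is the codeword of the
message `(C X) i`; it is nonzero, and hence has weight at least `d`, as soon as `(C u) i ≠ 0` or
`(C v) i ≠ 0`. It remains to bound the size of the joint support of `C u` and `C v`. Sum the
weights of the `q + 1` nonzero codewords `C v` and `C (u + a v)`, `a ∈ F`: the sum is at least
`(q + 1) d`, while only coordinates in the joint support contribute, each at most `q` times
(`card_lines`). Hence the joint support has at least `(q + 1) d / q` elements.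
-/

open Matrix

/-- Hamming weight of a matrix: the number of nonzero entries. -/
noncomputable def matWt {η κ : Type*} {F : Type*} [Zero F] (M : Matrix η κ F) : ℕ :=
  Set.ncard {p : η × κ | M p.1 p.2 ≠ 0}

/-- `C` is a generator matrix of an `ε`-balanced code of minimum distance `d`:
`x ↦ Cx` is injective and every nonzero codeword `Cx` has Hamming weight in `[d, (1+ε)d]`. -/
def IsBalancedGen {F : Type*} [Field F] {N n : ℕ} (ε : ℝ) (d : ℕ)
    (C : Matrix (Fin N) (Fin n) F) : Prop :=
  Function.Injective C.mulVec ∧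
  ∀ x : Fin n → F, x ≠ 0 →
    (d : ℝ) ≤ (hammingWt (C.mulVec x) : ℝ) ∧
    (hammingWt (C.mulVec x) : ℝ) ≤ (1 + ε) * d

/-- Evaluation of the coefficient matrix `Q` at the matrix `X`:
`Q(X) = Σ_{i,j} Q[i,j] ⬝ X[i,j]`. -/
def quadEval {F : Type*} [Field F] {n : ℕ} (Q X : Matrix (Fin n) (Fin n) F) : F :=
  ∑ i, ∑ j, Q i j * X i j

open Classical in
lemma hammingWt_eq_sum {ι F : Type*} [Fintype ι] [Zero F] (x : ι → F) :
    hammingWt x = ∑ i, if x i ≠ 0 then 1 else 0 := by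
  rw [hammingWt, Set.ncard_eq_toFinset_card', Finset.sum_boole]
  simp

lemma matWt_eq_sum {η κ F : Type*} [Fintype η] [Fintype κ] [Zero F] (M : Matrix η κ F) :
    matWt M = ∑ i, hammingWt (M i) := by
  classical
  simp_rw [hammingWt_eq_sum]
  rw [matWt, Set.ncard_eq_toFinset_card', ← Fintype.sum_prod_type', Finset.sum_boole]
  simp

open Classical in
/-- Of the `q + 1` points `(0 : 1)`, `(1 : a)` of the projective line, at most `q` give a nonzero
combination of `s` and `t`, and none does if `s = t = 0`. -/
lemma card_lines {F : Type*} [Field F] [Fintype F] (s t : F) :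
    (∑ a : F, if s + a * t ≠ 0 then 1 else 0) + (if t ≠ 0 then 1 else 0)
      ≤ Fintype.card F * (if s ≠ 0 ∨ t ≠ 0 then 1 else 0) := by
  by_cases ht : t = 0
  · subst ht
    by_cases hs : s = 0 <;> simp [hs]
  · have hlt : (∑ a : F, if s + a * t ≠ 0 then 1 else 0) < ∑ _a : F, 1 := by
      refine Finset.sum_lt_sum (fun a _ => by split_ifs <;> simp)
        ⟨-s / t, Finset.mem_univ _, ?_⟩
      have : s + -s / t * t = 0 := by field_simp; ring
      simp [this]
    simp [ht] at hlt ⊢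
    omega

/-- The matrix `X` has rows `u = X r` and `v = X s` that are linearly independent, in the form that
`v` and all the `u + a v` are nonzero. -/
lemma exists_indep_rows {F : Type*} [Field F] {n m : ℕ}
    (Q : Fin m → Matrix (Fin n) (Fin n) F)
    (hno : ¬ ∃ x : Fin n → F, x ≠ 0 ∧ ∀ ℓ, quadEval (Q ℓ) (vecMulVec x x) = 0)
    (X : Matrix (Fin n) (Fin n) F) (hX : X.IsSymm) (hQ : ∀ ℓ, quadEval (Q ℓ) X = 0)
    (h0 : X ≠ 0) : ∃ r s, X s ≠ 0 ∧ ∀ a : F, X r + a • X s ≠ 0 := by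
  obtain ⟨s, hs⟩ : ∃ s, X s ≠ 0 := by
    by_contra! h
    exact h0 (funext h)
  by_contra! hcon
  have hrow : ∀ r, ∃ a : F, X r = a • X s := fun r => by
    obtain ⟨a, ha⟩ := hcon r s hs
    exact ⟨-a, by rw [neg_smul]; exact eq_neg_of_add_eq_zero_left ha⟩
  choose a ha using hrow
  -- By symmetry the row `X s` is itself a multiple of the vector `a` of coefficients.
  have hv : ∀ j, X s j = X s s * a j := fun j => by
    rw [← hX.apply, ha j]
    simp [mul_comm]
  have hXe : ∀ i j, X i j = X s s * (a i * a j) := fun i j => by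
    rw [ha i, Pi.smul_apply, hv j, smul_eq_mul]
    ring
  have hss : X s s ≠ 0 := fun h => hs (funext fun j => by rw [hv j, h]; simp)
  refine hno ⟨a, fun h => hs (funext fun j => by rw [hv j, h]; simp), fun ℓ => ?_⟩
  have h1 : quadEval (Q ℓ) X = X s s * quadEval (Q ℓ) (vecMulVec a a) := by
    simp only [quadEval, Finset.mul_sum, vecMulVec_apply]
    refine Finset.sum_congr rfl fun i _ => Finset.sum_congr rfl fun j _ => ?_
    rw [hXe i j]
    ring
  rw [hQ ℓ] at h1
  exact (mul_eq_zero.mp h1.symm).resolve_left hss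

/-- Soundness of the MDP reduction: if no nonzero `x` satisfies all the quadratic
equations, then every nonzero `Y ∈ V = {C X Cᵀ : X = Xᵀ, Q_ℓ(X) = 0 ∀ℓ}` has Hamming
weight at least `(1 + 1/q) d²`, i.e. `q ⬝ ‖Y‖₀ ≥ (q+1) d²`. -/
theorem mdp_reduction_soundness {F : Type*} [Field F] [Fintype F] {N n m : ℕ}
    (Q : Fin m → Matrix (Fin n) (Fin n) F)
    (ε : ℝ) (hε : 0 < ε) (d : ℕ) (hd : 1 ≤ d)
    (C : Matrix (Fin N) (Fin n) F) (hC : IsBalancedGen ε d C)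
    (hno : ¬ ∃ x : Fin n → F, x ≠ 0 ∧ ∀ ℓ, quadEval (Q ℓ) (vecMulVec x x) = 0) :
    ∀ Y : Matrix (Fin N) (Fin N) F,
      (∃ X : Matrix (Fin n) (Fin n) F,
        X.IsSymm ∧ (∀ ℓ, quadEval (Q ℓ) X = 0) ∧ Y = C * X * Cᵀ) →
      Y ≠ 0 →
      Fintype.card F * matWt Y ≥ (Fintype.card F + 1) * d ^ 2 := by
  classical
  rintro Y ⟨X, hX, hQ, rfl⟩ hY
  have hX0 : X ≠ 0 := by
    rintro rfl
    simp at hY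
  have hwt : ∀ x : Fin n → F, x ≠ 0 → d ≤ hammingWt (C *ᵥ x) := fun x hx => by
    exact_mod_cast (hC.2 x hx).1
  obtain ⟨r, s, hs, hrs⟩ := exists_indep_rows Q hno X hX hQ hX0
  -- `S` is the size of the joint support of the codewords of the rows `r` and `s`.
  set S : ℕ := ∑ i, if (C *ᵥ X r) i ≠ 0 ∨ (C *ᵥ X s) i ≠ 0 then 1 else 0 with hS
  have hlow : (Fintype.card F + 1) * d ≤
      (∑ a : F, hammingWt (C *ᵥ (X r + a • X s))) + hammingWt (C *ᵥ X s) := by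
    have h1 : ∑ _a : F, d ≤ ∑ a : F, hammingWt (C *ᵥ (X r + a • X s)) :=
      Finset.sum_le_sum fun a _ => hwt _ (hrs a)
    have h2 := hwt _ hs
    simp only [Finset.sum_const, Finset.card_univ, smul_eq_mul] at h1
    linarith
  have hup : (∑ a : F, hammingWt (C *ᵥ (X r + a • X s))) + hammingWt (C *ᵥ X s)
      ≤ Fintype.card F * S := by
    simp_rw [hammingWt_eq_sum]
    rw [Finset.sum_comm, ← Finset.sum_add_distrib, hS, Finset.mul_sum]
    refine Finset.sum_le_sum fun i _ => ?_
    simpa only [mulVec_add, mulVec_smul, Pi.add_apply, Pi.smul_apply, smul_eq_mul]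
      using card_lines ((C *ᵥ X r) i) ((C *ᵥ X s) i)
  have hmat : S * d ≤ matWt (C * X * Cᵀ) := by
    rw [matWt_eq_sum, hS, Finset.sum_mul]
    refine Finset.sum_le_sum fun i _ => ?_
    have hrow : (C * X * Cᵀ) i = C *ᵥ (C * X) i := by
      ext j
      simp only [mul_apply (M := C * X), mulVec, dotProduct, transpose_apply]
      exact Finset.sum_congr rfl fun k _ => mul_comm _ _
    have hent : ∀ k, (C * X) i k = (C *ᵥ X k) i := fun k => by
      simp only [mul_apply, mulVec, dotProduct]
      exact Finset.sum_congr rfl fun l _ => by rw [hX.apply]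
    split_ifs with h
    · rw [one_mul, hrow]
      refine hwt _ fun h0 => ?_
      rw [← hent, ← hent, h0] at h
      simp at h
    · simp
  calc (Fintype.card F + 1) * d ^ 2 = (Fintype.card F + 1) * d * d := by ring
    _ ≤ Fintype.card F * S * d := Nat.mul_le_mul_right _ (hlow.trans hup)
    _ = Fintype.card F * (S * d) := by ring
    _ ≤ Fintype.card F * matWt (C * X * Cᵀ) := Nat.mul_le_mul_left _ hmat
end
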